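/- For every ρ ∈ [0,1] and n ≥ 2, there exists at least one equilibrium point f^∞ ∈ ℝⁿ of the spatially homogeneous system, i.e., a vector with f^∞_j ≥ 0 for all j, ∑_j f^∞_j = ρ, and ∑_{h,k=1}^n A_{hk}^j[ρ] f^∞_h f^∞_k = ρ f^∞_j for every j. -/

import Mathlib

open Finset

/-!
Normalised to total mass one, an equilibrium is a fixed point of the gain operator, which maps the
standard simplex continuously to itself; as the gain is quadratic, scaling a fixed point by `ρ`
gives an equilibrium of mass `ρ`. The fixed point exists by Brouwer's theorem, whose combinatorial
core is Scarf's lemma here: instead of the cells of a triangulation one counts, modulo two, the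
dominant subsets of a finite net of the simplex with respect to the orders given by the coordinates.
-/

section ErasingImages

variable {X Y : Type*} [DecidableEq X] [DecidableEq Y]

lemma sum_card_insert_eq_sum_card_erase [Fintype X] (P Q : Finset X → Prop)
    [DecidablePred P] [DecidablePred Q] :
    ∑ Z with P Z, #{x | x ∉ Z ∧ Q (insert x Z)} = ∑ W with Q W, #{x ∈ W | P (W.erase x)} := by
  simp_rw [← card_sigma]
  refine card_nbij' (fun p ↦ ⟨insert p.2 p.1, p.2⟩) (fun p ↦ ⟨p.1.erase p.2, p.2⟩) ?_ ?_ ?_ ?_ <;>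
    rintro ⟨_, _⟩ h <;> simp_all

lemma card_filter_exists_ne_map_eq {S : Finset X} {f : X → Y} (h : #(S.image f) + 1 = #S) :
    #{x ∈ S | ∃ y ∈ S, y ≠ x ∧ f y = f x} = 2 := by
  obtain ⟨a, ha, b, hb, hab, hf⟩ := exists_ne_map_eq_of_card_lt_of_maps_to
    (by lia : #(S.image f) < #S) fun _ ↦ mem_image_of_mem f
  have injOn_erase {u v : X} (hu : u ∈ S) (hv : v ∈ S) (huv : u ≠ v) (hfuv : f u = f v) :
      Set.InjOn f (S.erase u) := by
    have himage : (S.erase u).image f = S.image f := by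
      refine (image_subset_image (erase_subset u S)).antisymm (image_subset_iff.2 fun x hx ↦ ?_)
      grind
    rw [← card_image_iff, himage, card_erase_of_mem hu]
    lia
  have hinj_a := injOn_erase ha hb hab hf
  have hinj_b := injOn_erase hb ha hab.symm hf.symm
  rw [card_eq_two]
  refine ⟨a, b, hab, ?_⟩
  ext x
  simp only [Set.InjOn, mem_coe, mem_erase] at hinj_a hinj_b
  grind

lemma odd_card_filter_image_erase_iff [Fintype Y] {S : Finset X} (hS : #S = Fintype.card Y)
    (f : X → Y) (y : Y) :
    Odd #{x ∈ S | (S.erase x).image f = univ.erase y} ↔ S.image f = univ := by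
  have hcard : #(univ.erase y) + 1 = #S := by
    rw [card_erase_add_one (mem_univ y), card_univ, hS]
  refine ⟨fun hodd ↦ ?_, fun himage ↦ ?_⟩
  · by_contra hne
    obtain ⟨x, hx⟩ := card_pos.1 hodd.pos
    have himage : S.image f = univ.erase y := by
      have hx := (mem_filter.1 hx).2
      have hsub : univ.erase y ⊆ S.image f := hx ▸ image_subset_image (erase_subset x S)
      grind
    have hredundant : {x ∈ S | (S.erase x).image f = univ.erase y} =
        {x ∈ S | ∃ z ∈ S, z ≠ x ∧ f z = f x} := by
      rw [← himage]
      refine filter_congr fun x hx ↦ ⟨fun h ↦ ?_, fun ⟨z, hz, hzx, hfz⟩ ↦ ?_⟩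
      · have := h ▸ mem_image_of_mem f hx
        grind
      · refine (image_subset_image (erase_subset x S)).antisymm fun w hw ↦ ?_
        grind
    rw [hredundant, card_filter_exists_ne_map_eq (by rw [himage, hcard])] at hodd
    exact absurd hodd (by decide)
  · have hinj : Set.InjOn f S := card_image_iff.1 (by rw [himage, card_univ, hS])
    obtain ⟨x, hx, rfl⟩ := mem_image.1 (himage ▸ mem_univ y)
    have hunique : {z ∈ S | (S.erase z).image f = univ.erase (f x)} = {x} := by
      ext z
      have herase (hz : z ∈ S) : (S.erase z).image f = univ.erase (f z) := by
        rw [← himage]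
        ext w
        simp only [Set.InjOn, mem_coe] at hinj
        grind
      simp only [mem_filter, mem_singleton]
      constructor
      · rintro ⟨hz, h⟩
        exact hinj hz hx ((erase_inj _ (mem_univ _)).1 ((herase hz).symm.trans h))
      · rintro rfl
        exact ⟨hx, herase hx⟩
    simp [hunique]

end ErasingImages

section Dominance

variable {ι Y α : Type*} [LinearOrder α] {r : ι → Y → α} {Z W : Finset Y} {i : ι} {x : Y}

/-- Scarf's notion of a dominant set, for the family of orders on `Y` induced by the ranks `r i`:
every point lies weakly below the whole of `Z` in at least one of the orders. Dominant sets with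
as many elements as there are orders play the part of the top-dimensional simplices of a
triangulation, and dominant sets with one element less that of its facets. -/
def IsDominant (r : ι → Y → α) (Z : Finset Y) : Prop :=
  ∀ x, ∃ i, ∀ y ∈ Z, r i x ≤ r i y

/-- The points which no order other than the `i`-th places weakly below the whole of `Z`: the
candidates for a vertex that completes the facet `Z` on its `i`-th side. -/
def pivotRegion (r : ι → Y → α) (Z : Finset Y) (i : ι) : Set Y :=
  {x | ∀ j ≠ i, ∃ y ∈ Z, r j y < r j x}

/-- A choice, for each of the orders, of a least element of `Z`. -/
def IsMinSelection (r : ι → Y → α) (Z : Finset Y) (m : ι → Y) : Prop :=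
  ∀ i, m i ∈ Z ∧ ∀ y ∈ Z, r i (m i) ≤ r i y

lemma exists_isMinSelection (r : ι → Y → α) (hZ : Z.Nonempty) : ∃ m, IsMinSelection r Z m := by
  choose m hm using fun i ↦ exists_min_image Z (r i) hZ
  exact ⟨m, hm⟩

lemma IsDominant.mono (hW : IsDominant r W) (hZW : Z ⊆ W) : IsDominant r Z := fun x ↦
  (hW x).imp fun _ hi y hy ↦ hi y (hZW hy)

lemma IsDominant.le_of_mem_pivotRegion (hZ : IsDominant r Z) (hx : x ∈ pivotRegion r Z i) :
    ∀ y ∈ Z, r i x ≤ r i y := by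
  obtain ⟨j, hj⟩ := hZ x
  obtain rfl : j = i := by
    by_contra hji
    obtain ⟨y, hy, hyx⟩ := hx j hji
    exact (hj y hy).not_gt hyx
  exact hj

lemma IsDominant.disjoint_pivotRegion (hZ : IsDominant r Z) {j : ι} (hij : i ≠ j) :
    Disjoint (pivotRegion r Z i) (pivotRegion r Z j) := by
  refine Set.disjoint_left.2 fun x hi hj ↦ ?_
  obtain ⟨y, hy, hyx⟩ := hi j hij.symm
  exact (hZ.le_of_mem_pivotRegion hj y hy).not_gt hyx

lemma IsDominant.insert_iff_isMaxOn [DecidableEq Y] (hZ : IsDominant r Z)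
    (hx : x ∈ pivotRegion r Z i) :
    IsDominant r (insert x Z) ↔ IsMaxOn (r i) (pivotRegion r Z i) x := by
  refine ⟨fun h w hw ↦ ?_, fun hmax w ↦ ?_⟩
  · refine h.le_of_mem_pivotRegion (fun j hj ↦ ?_) x (mem_insert_self x Z)
    exact (hw j hj).imp fun _ hy ↦ ⟨mem_insert_of_mem hy.1, hy.2⟩
  · by_cases hw : w ∈ pivotRegion r Z i
    · exact ⟨i, forall_mem_insert _ _ _ |>.2 ⟨hmax hw, hZ.le_of_mem_pivotRegion hw⟩⟩
    · simp only [pivotRegion, Set.mem_ofPred_eq, not_forall, not_exists, not_and, not_lt] at hw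
      obtain ⟨j, hj, hwj⟩ := hw
      obtain ⟨y, hy, hyx⟩ := hx j hj
      exact ⟨j, forall_mem_insert _ _ _ |>.2 ⟨(hwj y hy).trans hyx.le, hwj⟩⟩

lemma existsUnique_isMaxOn [Finite Y] {f : Y → α} (hf : f.Injective) {S : Set Y}
    (hS : S.Nonempty) : ∃! x, x ∈ S ∧ IsMaxOn f S x := by
  obtain ⟨x, hx, hmax⟩ := Set.exists_max_image S f S.toFinite hS
  exact ⟨x, ⟨hx, hmax⟩, fun y hy ↦ hf ((hmax y hy.1).antisymm (hy.2 hx))⟩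

variable {m : ι → Y}

lemma IsDominant.exists_eq_of_mem (hr : ∀ i, (r i).Injective) (hZ : IsDominant r Z)
    (hm : IsMinSelection r Z m) {z : Y} (hz : z ∈ Z) : ∃ i, m i = z := by
  obtain ⟨i, hi⟩ := hZ z
  exact ⟨i, hr i (((hm i).2 z hz).antisymm (hi _ (hm i).1))⟩

lemma IsDominant.notMem_of_mem_pivotRegion (hr : ∀ i, (r i).Injective) (hZ : IsDominant r Z)
    (hm : IsMinSelection r Z m) (hi : ∃ j, j ≠ i ∧ m j = m i) (hx : x ∈ pivotRegion r Z i) :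
    x ∉ Z := by
  intro hxZ
  obtain ⟨k, hk, rfl⟩ : ∃ k ≠ i, m k = x := by
    obtain ⟨k, rfl⟩ := hZ.exists_eq_of_mem hr hm hxZ
    rcases eq_or_ne k i with rfl | hk
    exacts [hi, ⟨k, hk, rfl⟩]
  obtain ⟨y, hy, hlt⟩ := hx k hk
  exact ((hm k).2 y hy).not_gt hlt

variable [Fintype ι] [DecidableEq Y]

lemma IsDominant.image_isMinSelection (hr : ∀ i, (r i).Injective) (hZ : IsDominant r Z)
    (hm : IsMinSelection r Z m) : univ.image m = Z := by
  ext z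
  simp only [mem_image, mem_univ, true_and]
  exact ⟨fun ⟨i, hi⟩ ↦ hi ▸ (hm i).1, hZ.exists_eq_of_mem hr hm⟩

/-- A dominant set of full cardinality is in bijection with the orders through their minima, and
the new point `x` is the minimum of exactly one of them. -/
lemma IsDominant.exists_mem_pivotRegion (hr : ∀ i, (r i).Injective)
    (hm : IsMinSelection r Z m) (hcard : #Z + 1 = Fintype.card ι) (hx : x ∉ Z)
    (hW : IsDominant r (insert x Z)) :
    ∃ i, (∃ j, j ≠ i ∧ m j = m i) ∧ x ∈ pivotRegion r Z i := by
  obtain ⟨m', hm'⟩ := exists_isMinSelection r (insert_nonempty x Z)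
  have hinj : m'.Injective := by
    rw [← Set.injOn_univ, ← coe_univ, ← card_image_iff, hW.image_isMinSelection hr hm',
      card_insert_of_notMem hx, hcard, card_univ]
  obtain ⟨i, rfl⟩ := hW.exists_eq_of_mem hr hm' (mem_insert_self x Z)
  have hm'_mem {j : ι} (hj : j ≠ i) : m' j ∈ Z :=
    (mem_insert.1 (hm' j).1).resolve_left (hinj.ne hj)
  have hm'_eq {j : ι} (hj : j ≠ i) : m' j = m j := hr j <|
    ((hm' j).2 _ (mem_insert_of_mem (hm j).1)).antisymm ((hm j).2 _ (hm'_mem hj))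
  refine ⟨i, ?_, fun j hj ↦ ⟨m' j, hm'_mem hj, ?_⟩⟩
  · obtain ⟨j, hj⟩ := hW.exists_eq_of_mem hr hm' (mem_insert_of_mem (hm i).1)
    have hji : j ≠ i := fun h ↦ hx (h ▸ hj ▸ (hm i).1)
    exact ⟨j, hji, (hm'_eq hji).symm.trans hj⟩
  · exact ((hm' j).2 _ (mem_insert_self _ Z)).lt_of_ne ((hr j).ne (hinj.ne hj))

open scoped Classical in
/-- Exactly two orders share their minimum on `Z`, and each of them accounts for one completion:
the largest point of its pivot region. -/
lemma IsDominant.card_filter_insert_eq_two [Fintype Y] (hr : ∀ i, (r i).Injective)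
    (hZ : IsDominant r Z) (hne : Z.Nonempty) (hcard : #Z + 1 = Fintype.card ι)
    (hpivot : ∀ i, (pivotRegion r Z i).Nonempty) :
    #{x | x ∉ Z ∧ IsDominant r (insert x Z)} = 2 := by
  obtain ⟨m, hm⟩ := exists_isMinSelection r hne
  choose top htop htop_unique using fun i ↦ existsUnique_isMaxOn (hr i) (hpivot i)
  have htop_inj : top.Injective := fun i j hij ↦ by
    by_contra hij_ne
    exact (hZ.disjoint_pivotRegion hij_ne).ne_of_mem (htop i).1 (htop j).1 hij
  have hcompletions : ({x | x ∉ Z ∧ IsDominant r (insert x Z)} : Finset Y) =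
      ({i | ∃ j, j ≠ i ∧ m j = m i} : Finset ι).image top := by
    ext x
    simp only [mem_filter, mem_univ, true_and, mem_image]
    constructor
    · rintro ⟨hx, hW⟩
      obtain ⟨i, hi, hxi⟩ := hW.exists_mem_pivotRegion hr hm hcard hx
      exact ⟨i, hi, (htop_unique i x ⟨hxi, (hZ.insert_iff_isMaxOn hxi).1 hW⟩).symm⟩
    · rintro ⟨i, hi, rfl⟩
      exact ⟨hZ.notMem_of_mem_pivotRegion hr hm hi (htop i).1,
        (hZ.insert_iff_isMaxOn (htop i).1).2 (htop i).2⟩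
  rw [hcompletions, card_image_of_injective _ htop_inj]
  simpa using card_filter_exists_ne_map_eq (S := univ) (f := m)
    (by rw [hZ.image_isMinSelection hr hm, hcard, card_univ])

end Dominance

section Slack

variable {ι Y α : Type*} [LinearOrder α] {r : ι → Y → α} {s : ι → Y}

/-- Scarf's slack points: `s i` is least in the `i`-th order, while in every other order it lies
above all points that are not slack. They play the part of the vertices of a large simplex that
surrounds the remaining points. -/
structure IsSlackFamily (r : ι → Y → α) (s : ι → Y) : Prop where
  le (i : ι) (y : Y) : r i (s i) ≤ r i y
  lt {i j : ι} (hij : i ≠ j) {y : Y} (hy : y ∉ Set.range s) : r i y < r i (s j)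

lemma IsSlackFamily.mem_pivotRegion (hs : IsSlackFamily r s) {Z : Finset Y} {y : Y} (hyZ : y ∈ Z)
    (hy : y ∉ Set.range s) (i : ι) : s i ∈ pivotRegion r Z i := fun _ hji ↦
  ⟨y, hyZ, hs.lt hji hy⟩

variable [Fintype ι] [DecidableEq ι] [DecidableEq Y]

/-- The facet of the surrounding simplex spanned by all slack points except the `i`-th. -/
def slackFacet (s : ι → Y) (i : ι) : Finset Y := (univ.erase i).image s

lemma mem_slackFacet {i : ι} {x : Y} : x ∈ slackFacet s i ↔ ∃ j ≠ i, s j = x := by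
  simp [slackFacet]

lemma card_slackFacet_add_one (hs : s.Injective) (i : ι) :
    #(slackFacet s i) + 1 = Fintype.card ι := by
  rw [slackFacet, card_image_of_injective _ hs, card_erase_add_one (mem_univ i), card_univ]

lemma IsSlackFamily.pivotRegion_slackFacet (hs : IsSlackFamily r s) (hr : ∀ i, (r i).Injective)
    (i : ι) : pivotRegion r (slackFacet s i) i = (slackFacet s i : Set Y)ᶜ := by
  ext x
  simp only [Set.mem_compl_iff, mem_coe, mem_slackFacet, not_exists, not_and]
  refine ⟨fun hx j hj hjx ↦ ?_, fun hx j hj ↦ ?_⟩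
  · obtain ⟨y, -, hy⟩ := hx j hj
    exact (hs.le j y).not_gt (hjx ▸ hy)
  · exact ⟨s j, mem_slackFacet.2 ⟨j, hj, rfl⟩, (hs.le j x).lt_of_ne ((hr j).ne (hx j hj))⟩

lemma IsSlackFamily.isDominant_slackFacet (hs : IsSlackFamily r s) (i : ι) :
    IsDominant r (slackFacet s i) := by
  intro x
  by_cases hx : x ∈ Set.range s
  · obtain ⟨j, rfl⟩ := hx
    exact ⟨j, fun y _ ↦ hs.le j y⟩
  · refine ⟨i, fun y hy ↦ ?_⟩
    obtain ⟨j, hj, rfl⟩ := mem_slackFacet.1 hy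
    exact (hs.lt hj.symm hx).le

variable [Fintype Y] {c : Y → ι}

open scoped Classical in
lemma IsSlackFamily.card_filter_insert_slackFacet (hs : IsSlackFamily r s)
    (hr : ∀ i, (r i).Injective) (hs_inj : s.Injective) (i : ι) :
    #{x | x ∉ slackFacet s i ∧ IsDominant r (insert x (slackFacet s i))} = 1 := by
  have hregion := hs.pivotRegion_slackFacet hr i
  have hne : (pivotRegion r (slackFacet s i) i).Nonempty := by
    refine ⟨s i, hregion ▸ fun h ↦ ?_⟩
    obtain ⟨j, hj, hji⟩ := mem_slackFacet.1 h
    exact hj (hs_inj hji)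
  obtain ⟨x, hx, hx_unique⟩ := existsUnique_isMaxOn (hr i) hne
  refine card_eq_one.2 ⟨x, ?_⟩
  ext y
  have hy : y ∉ slackFacet s i ↔ y ∈ pivotRegion r (slackFacet s i) i := by simp [hregion]
  simp only [mem_filter, mem_univ, true_and, mem_singleton, hy]
  rw [and_congr_right fun h ↦ (hs.isDominant_slackFacet i).insert_iff_isMaxOn h]
  exact ⟨hx_unique y, fun h ↦ h ▸ hx⟩

/-- The doors of the path-following argument, with respect to a colouring `c`: facets whose
vertices carry every colour except `i`. -/
def IsDoor (r : ι → Y → α) (c : Y → ι) (i : ι) (Z : Finset Y) : Prop :=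
  IsDominant r Z ∧ #Z + 1 = Fintype.card ι ∧ Z.image c = univ.erase i

omit [Fintype Y] in
lemma IsSlackFamily.isDoor_slackFacet (hs : IsSlackFamily r s) (hc : Function.LeftInverse c s)
    (i : ι) : IsDoor r c i (slackFacet s i) :=
  ⟨hs.isDominant_slackFacet i, card_slackFacet_add_one hc.injective i, by
    simp [slackFacet, image_image, hc.comp_eq_id]⟩

omit [Fintype Y] in
lemma IsDoor.eq_slackFacet {i : ι} {Z : Finset Y} (hZ : IsDoor r c i Z)
    (hc : Function.LeftInverse c s) (hslack : ∀ y ∈ Z, y ∈ Set.range s) : Z = slackFacet s i := by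
  refine eq_of_subset_of_card_le (fun y hy ↦ ?_) ?_
  · obtain ⟨j, rfl⟩ := hslack y hy
    have hj : j ∈ univ.erase i := hZ.2.2 ▸ mem_image.2 ⟨s j, hy, hc j⟩
    exact mem_image_of_mem s hj
  · exact Nat.le_of_add_le_add_right
      ((card_slackFacet_add_one hc.injective i).trans hZ.2.1.symm).le

open scoped Classical in
lemma IsDoor.odd_card_filter_insert_iff {i : ι} {Z : Finset Y} (hZ : IsDoor r c i Z)
    (hr : ∀ i, (r i).Injective) (hs : IsSlackFamily r s) (hc : Function.LeftInverse c s) :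
    Odd #{x | x ∉ Z ∧ IsDominant r (insert x Z)} ↔ Z = slackFacet s i := by
  refine ⟨fun hodd ↦ hZ.eq_slackFacet hc ?_, ?_⟩
  · by_contra! ⟨y, hyZ, hy⟩
    rw [hZ.1.card_filter_insert_eq_two hr ⟨y, hyZ⟩ hZ.2.1
      fun i ↦ ⟨s i, hs.mem_pivotRegion hyZ hy i⟩] at hodd
    exact absurd hodd (by decide)
  · rintro rfl
    rw [hs.card_filter_insert_slackFacet hr hc.injective]
    exact odd_one

open scoped Classical in
lemma IsSlackFamily.odd_sum_card_filter_insert (hs : IsSlackFamily r s)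
    (hr : ∀ i, (r i).Injective) (hc : Function.LeftInverse c s) (i : ι) :
    Odd (∑ Z with IsDoor r c i Z, #{x | x ∉ Z ∧ IsDominant r (insert x Z)}) := by
  have hodd : ({Z | IsDoor r c i Z ∧ Odd #{x | x ∉ Z ∧ IsDominant r (insert x Z)}} :
      Finset (Finset Y)) = {slackFacet s i} := by
    ext Z
    simp only [mem_filter, mem_univ, true_and, mem_singleton]
    rw [and_congr_right fun hZ ↦ hZ.odd_card_filter_insert_iff hr hs hc]
    exact and_iff_right_of_imp fun h ↦ h ▸ hs.isDoor_slackFacet hc i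
  rw [odd_sum_iff_odd_card_odd, filter_filter, hodd, card_singleton]
  exact odd_one

omit [DecidableEq Y] in
open scoped Classical in
/-- Count the pairs of a door and a dominant set of full cardinality containing it. A door other
than the slack facet has two such neighbours and the slack facet has one; a dominant set of full
cardinality contains zero, one or two doors, and exactly one if and only if it carries all
colours. -/
lemma IsSlackFamily.odd_card_rainbow [Nonempty ι] (hs : IsSlackFamily r s)
    (hr : ∀ i, (r i).Injective) (hc : Function.LeftInverse c s) :
    Odd #{W : Finset Y | (IsDominant r W ∧ #W = Fintype.card ι) ∧ W.image c = univ} := by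
  obtain ⟨i⟩ := ‹Nonempty ι›
  have hdoor {Z : Finset Y} (hZ : IsDoor r c i Z) {x : Y} (hx : x ∉ Z) :
      IsDominant r (insert x Z) ↔
        IsDominant r (insert x Z) ∧ #(insert x Z) = Fintype.card ι := by
    rw [card_insert_of_notMem hx, and_iff_left hZ.2.1]
  have hroom {W : Finset Y} (hW : IsDominant r W ∧ #W = Fintype.card ι) {x : Y} (hx : x ∈ W) :
      IsDoor r c i (W.erase x) ↔ (W.erase x).image c = univ.erase i := by
    simp only [IsDoor, hW.1.mono (erase_subset x W), card_erase_add_one hx, hW.2, true_and]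
  have hincidence : ∑ Z with IsDoor r c i Z, #{x | x ∉ Z ∧ IsDominant r (insert x Z)} =
      ∑ W with IsDominant r W ∧ #W = Fintype.card ι,
        #{x ∈ W | (W.erase x).image c = univ.erase i} := by
    refine (sum_congr rfl fun Z hZ ↦ ?_).trans <|
      (sum_card_insert_eq_sum_card_erase (IsDoor r c i) _).trans <| sum_congr rfl fun W hW ↦ ?_
    · exact congrArg card <| filter_congr fun x _ ↦
        and_congr_right (hdoor (mem_filter.1 hZ).2)
    · exact congrArg card <| filter_congr fun x hx ↦ hroom (mem_filter.1 hW).2 hx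
  have hodd := hs.odd_sum_card_filter_insert hr hc i
  rw [hincidence, odd_sum_iff_odd_card_odd, filter_filter] at hodd
  refine (congrArg (Odd #·) <| filter_congr fun W _ ↦ and_congr_right fun hW ↦ ?_).mp hodd
  exact odd_card_filter_image_erase_iff hW.2 c i

end Slack

section ScarfLemma

variable {ι T α : Type*} [LinearOrder ι]

/-- The ranks `r i`, made injective by breaking ties with the order of `T`, and extended to a
disjoint union in which the copy of `ι` is a slack family. -/
def slackRank (r : ι → T → α) (i : ι) : T ⊕ ι → WithBot ((α ×ₗ T) ⊕ₗ ι) :=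
  Sum.elim (fun x ↦ ↑(Sum.inlₗ (toLex (r i x, x)) : (α ×ₗ T) ⊕ₗ ι))
    fun j ↦ if j = i then ⊥ else ↑(Sum.inrₗ j : (α ×ₗ T) ⊕ₗ ι)

lemma slackRank_injective (r : ι → T → α) (i : ι) : (slackRank r i).Injective := by
  rintro (x | j) (y | k) h
  · simp_all [slackRank]
  · simp only [slackRank, Sum.elim_inl, Sum.elim_inr] at h
    split_ifs at h <;> simp_all
  · simp only [slackRank, Sum.elim_inl, Sum.elim_inr] at h
    split_ifs at h <;> simp_all
  · simp only [slackRank, Sum.elim_inr] at h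
    split_ifs at h <;> simp_all

variable [LinearOrder T] [LinearOrder α]

lemma isSlackFamily_slackRank (r : ι → T → α) : IsSlackFamily (slackRank r) Sum.inr where
  le i y := by simp [slackRank]
  lt {i j} hij y hy := by
    obtain ⟨x, rfl⟩ : ∃ x, y = Sum.inl x := by
      rcases y with x | k
      exacts [⟨x, rfl⟩, absurd ⟨k, rfl⟩ hy]
    simp [slackRank, hij.symm]

lemma le_of_slackRank_inl_le {r : ι → T → α} {i : ι} {x y : T}
    (h : slackRank r i (Sum.inl x) ≤ slackRank r i (Sum.inl y)) : r i x ≤ r i y := by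
  simp only [slackRank, Sum.elim_inl, WithBot.coe_le_coe, Sum.Lex.inl_le_inl_iff] at h
  exact Prod.Lex.monotone_fst _ _ h

end ScarfLemma

/-- Scarf's lemma. A slack point in a dominant set `W` rules out its own order as a witness. If `W`
carries all colours, every order that does serve as a witness is thus the colour of a point of
`T`. -/
theorem exists_finset_forall_exists_forall_le {ι T α : Type*} [Finite ι] [Finite T]
    [LinearOrder α] (r : ι → T → α) (c : T → ι) :
    ∃ σ : Finset T, ∀ y, ∃ z ∈ σ, ∀ x ∈ σ, r (c z) y ≤ r (c z) x := by
  classical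
  rcases isEmpty_or_nonempty T with _ | ⟨⟨t⟩⟩
  · exact ⟨∅, isEmptyElim⟩
  have : Nonempty ι := ⟨c t⟩
  have := Fintype.ofFinite ι
  have := Fintype.ofFinite T
  let := linearOrderOfSTO (WellOrderingRel (α := ι))
  let := linearOrderOfSTO (WellOrderingRel (α := T))
  obtain ⟨W, hW⟩ := card_pos.1 ((isSlackFamily_slackRank r).odd_card_rainbow
    (slackRank_injective r) (c := Sum.elim c id) fun _ ↦ rfl).pos
  obtain ⟨⟨hdom, -⟩, hrainbow⟩ := (mem_filter.1 hW).2
  refine ⟨W.toLeft, fun y ↦ ?_⟩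
  obtain ⟨i, hi⟩ := hdom (Sum.inl y)
  have hslack : Sum.inr i ∉ W := fun h ↦ by simpa [slackRank] using hi _ h
  obtain ⟨z | j, hz, rfl⟩ := mem_image.1 (hrainbow.symm ▸ mem_univ i)
  · exact ⟨z, mem_toLeft.2 hz, fun x hx ↦ le_of_slackRank_inl_le (hi _ (mem_toLeft.1 hx))⟩
  · exact absurd hz hslack

/-- The coordinates of `m` are the minima of those of `σ` where Scarf's lemma provides a colour, and
zero elsewhere. -/
lemma exists_corner_of_coloring {ι T : Type*} [Finite ι] [Finite T] [Nonempty T]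
    {p : T → ι → ℝ} (hp : 0 ≤ p) (c : T → ι) :
    ∃ σ : Finset T, σ.Nonempty ∧ ∃ m : ι → ℝ, 0 ≤ m ∧ (∀ x ∈ σ, m ≤ p x) ∧
      (∀ i, m i = 0 ∨ ∃ z ∈ σ, c z = i) ∧ ∀ y, ∃ i, p y i ≤ m i := by
  classical
  obtain ⟨σ, hσ⟩ := exists_finset_forall_exists_forall_le (fun i x ↦ p x i) c
  have hne : σ.Nonempty := (hσ (Classical.arbitrary T)).imp fun _ h ↦ h.1
  refine ⟨σ, hne, fun i ↦ if ∃ z ∈ σ, c z = i then σ.inf' hne (p · i) else 0,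
    fun i ↦ ?_, fun x hx i ↦ ?_, fun i ↦ ?_, fun y ↦ ?_⟩
  · dsimp only
    split_ifs
    exacts [le_inf' _ _ fun x _ ↦ hp x i, le_rfl]
  · dsimp only
    split_ifs
    exacts [inf'_le (p · i) hx, hp x i]
  · exact (em _).symm.imp_left fun h ↦ if_neg h
  · obtain ⟨z, hz, hzy⟩ := hσ y
    refine ⟨c z, ?_⟩
    dsimp only
    rw [if_pos ⟨z, hz, rfl⟩]
    exact le_inf' _ _ hzy

section Simplex

variable {ι : Type*} [Fintype ι]

lemma exists_mem_forall_lt_of_net [Nonempty ι] {T : Set (ι → ℝ)} {δ : ℝ}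
    (hT : stdSimplex ℝ ι ⊆ ⋃ y ∈ T, Metric.ball y δ) (hδ : 0 < δ) {m : ι → ℝ} (hm : 0 ≤ m)
    (hsum : ∑ i, m i + Fintype.card ι * δ ≤ 1) : ∃ y ∈ T, ∀ i, m i < y i := by
  have hcard : (0 : ℝ) < Fintype.card ι := by exact_mod_cast Fintype.card_pos
  set t := (1 - ∑ i, m i) / Fintype.card ι with ht
  have hδt : δ ≤ t := by rw [ht, le_div_iff₀ hcard]; linarith
  have hp : (fun i ↦ m i + t) ∈ stdSimplex ℝ ι := by
    refine ⟨fun i ↦ add_nonneg (hm i) (hδ.le.trans hδt), ?_⟩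
    rw [sum_add_distrib, sum_const, card_univ, nsmul_eq_mul, ht, mul_div_cancel₀ _ hcard.ne']
    ring
  obtain ⟨y, hy, hpy⟩ := Set.mem_iUnion₂.1 (hT hp)
  refine ⟨y, hy, fun i ↦ ?_⟩
  have := (abs_lt.1 ((dist_le_pi_dist _ _ i).trans_lt hpy)).2
  linarith

lemma le_add_of_mem_stdSimplex {m x : ι → ℝ} (hx : x ∈ stdSimplex ℝ ι) (hmx : m ≤ x) {ε : ℝ}
    (hsum : 1 - ∑ i, m i ≤ ε) (i : ι) : x i ≤ m i + ε := by
  have := single_le_sum (f := x - m) (fun j _ ↦ sub_nonneg.2 (hmx j)) (mem_univ i)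
  simp only [Pi.sub_apply, sum_sub_distrib, hx.2] at this
  linarith

lemma dist_le_of_mem_stdSimplex {m x y : ι → ℝ} (hx : x ∈ stdSimplex ℝ ι)
    (hy : y ∈ stdSimplex ℝ ι) (hmx : m ≤ x) (hmy : m ≤ y) {ε : ℝ} (hε : 0 ≤ ε)
    (hsum : 1 - ∑ i, m i ≤ ε) : dist x y ≤ ε := by
  refine (dist_pi_le_iff hε).2 fun i ↦ abs_sub_le_iff.2 ⟨?_, ?_⟩
  · linarith [le_add_of_mem_stdSimplex hx hmx hsum i, hmy i]
  · linarith [le_add_of_mem_stdSimplex hy hmy hsum i, hmx i]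

/-- Apply Scarf's lemma to the coordinate functions on a finite net of the simplex. As no point of
the net lies strictly above the corner `m`, the total mass of `m` is nearly one, so that the points
of `σ`, all of which lie above `m`, are close to each other. -/
lemma exists_mem_stdSimplex_forall_le_or_exists_dist_le [Nonempty ι] {A : ι → Set (ι → ℝ)}
    (hcover : stdSimplex ℝ ι ⊆ ⋃ i, A i) {ε : ℝ} (hε : 0 < ε) :
    ∃ x ∈ stdSimplex ℝ ι, ∀ i, x i ≤ ε ∨ ∃ z ∈ A i, dist x z ≤ ε := by
  classical
  have hδ : 0 < ε / Fintype.card ι := by positivity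
  obtain ⟨T, hTsub, hTfin, hT⟩ := (isCompact_stdSimplex ℝ ι).finite_cover_balls hδ
  have : Finite T := hTfin.to_subtype
  have : Nonempty T := by
    obtain ⟨y, hy, -⟩ := Set.mem_iUnion₂.1 (hT (single_mem_stdSimplex ℝ (Classical.arbitrary ι)))
    exact ⟨⟨y, hy⟩⟩
  choose c hc using fun y : T ↦ Set.mem_iUnion.1 (hcover (hTsub y.2))
  obtain ⟨σ, ⟨x, hx⟩, m, hm, hmσ, hmc, hdom⟩ :=
    exists_corner_of_coloring (p := ((↑) : T → ι → ℝ)) (fun y ↦ (hTsub y.2).1) c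
  have hmass : 1 - ∑ i, m i ≤ ε := by
    by_contra! hlt
    obtain ⟨y, hy, hmy⟩ := exists_mem_forall_lt_of_net hT hδ hm (by
      rw [mul_div_cancel₀ _ (by positivity)]
      linarith)
    obtain ⟨i, hi⟩ := hdom ⟨y, hy⟩
    exact (hmy i).not_ge hi
  refine ⟨x, hTsub x.2, fun i ↦ (hmc i).imp (fun hi ↦ ?_) ?_⟩
  · simpa [hi] using le_add_of_mem_stdSimplex (hTsub x.2) (hmσ x hx) hmass i
  · rintro ⟨z, hz, rfl⟩
    exact ⟨z, hc z, dist_le_of_mem_stdSimplex (hTsub x.2) (hTsub z.2) (hmσ x hx) (hmσ z hz)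
      hε.le hmass⟩

theorem exists_mem_stdSimplex_forall_mem [Nonempty ι] {A : ι → Set (ι → ℝ)}
    (hA : ∀ i, IsClosed (A i)) (hcover : stdSimplex ℝ ι ⊆ ⋃ i, A i)
    (hfacet : ∀ i, ∀ x ∈ stdSimplex ℝ ι, x i = 0 → x ∈ A i) :
    ∃ x ∈ stdSimplex ℝ ι, ∀ i, x ∈ A i := by
  classical
  -- By `hfacet`, the zeros of `g` on the simplex are the common points of the sets `A i`.
  let g : (ι → ℝ) → ENNReal := fun x ↦
    univ.sup fun i ↦ min (ENNReal.ofReal (x i)) (Metric.infEDist x (A i))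
  have hg : Continuous g := Continuous.finset_sup_apply fun i _ ↦
    (ENNReal.continuous_ofReal.comp (continuous_apply i)).min Metric.continuous_infEDist
  obtain ⟨x, hx, hmin⟩ := (isCompact_stdSimplex ℝ ι).exists_isMinOn
    ⟨_, single_mem_stdSimplex ℝ (Classical.arbitrary ι)⟩ hg.continuousOn
  have hgx : g x ≤ 0 := by
    refine ENNReal.le_of_forall_pos_le_add fun ε hε _ ↦ ?_
    obtain ⟨y, hy, hyε⟩ :=
      exists_mem_stdSimplex_forall_le_or_exists_dist_le hcover (NNReal.coe_pos.2 hε)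
    rw [zero_add]
    refine (hmin hy).trans (Finset.sup_le fun i _ ↦ min_le_iff.2 <| (hyε i).imp ?_ ?_)
    · exact fun h ↦ ENNReal.ofReal_le_of_le_toReal h
    · rintro ⟨z, hz, hyz⟩
      exact (Metric.infEDist_le_edist_of_mem hz).trans (edist_le_coe.2 hyz)
  refine ⟨x, hx, fun i ↦ ?_⟩
  rcases min_le_iff.1 (Finset.sup_le_iff.1 hgx i (mem_univ i)) with h | h
  · exact hfacet i x hx ((ENNReal.ofReal_eq_zero.1 (nonpos_iff_eq_zero.1 h)).antisymm (hx.1 i))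
  · exact (Metric.mem_iff_infEDist_zero_of_closed (hA i)).2 (nonpos_iff_eq_zero.1 h)

theorem exists_isFixedPt_of_mapsTo_stdSimplex [Nonempty ι] {F : (ι → ℝ) → ι → ℝ}
    (hF : ContinuousOn F (stdSimplex ℝ ι))
    (hmaps : Set.MapsTo F (stdSimplex ℝ ι) (stdSimplex ℝ ι)) :
    ∃ x ∈ stdSimplex ℝ ι, Function.IsFixedPt F x := by
  let A : ι → Set (ι → ℝ) := fun i ↦ {x ∈ stdSimplex ℝ ι | x i ≤ F x i}
  have hA i : IsClosed (A i) := (isClosed_stdSimplex ℝ ι).isClosed_le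
    (continuous_apply i).continuousOn ((continuous_apply i).comp_continuousOn hF)
  have hcover : stdSimplex ℝ ι ⊆ ⋃ i, A i := by
    intro x hx
    obtain ⟨i, -, hi⟩ := exists_le_of_sum_le univ_nonempty (hx.2.trans (hmaps hx).2.symm).le
    exact Set.mem_iUnion.2 ⟨i, hx, hi⟩
  obtain ⟨x, hx, hxA⟩ := exists_mem_stdSimplex_forall_mem hA hcover
    fun i x hx hxi ↦ ⟨hx, hxi.trans_le ((hmaps hx).1 i)⟩
  have heq := (sum_eq_sum_iff_of_le fun i _ ↦ (hxA i).2).1 (hx.2.trans (hmaps hx).2.symm)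
  exact ⟨x, hx, funext fun i ↦ (heq i (mem_univ i)).symm⟩

end Simplex

section Equilibria

variable {ι : Type*} [Fintype ι]

/-- The gain term of the spatially homogeneous kinetic system: the rate at which interactions
between pairs of particles produce particles in each state. -/
def gain (A : ι → ι → ι → ℝ) (f : ι → ℝ) (j : ι) : ℝ :=
  ∑ h, ∑ k, A h k j * f h * f k

lemma continuous_gain (A : ι → ι → ι → ℝ) : Continuous (gain A) := by
  unfold gain
  fun_prop

lemma gain_smul (A : ι → ι → ι → ℝ) (ρ : ℝ) (f : ι → ℝ) : gain A (ρ • f) = ρ ^ 2 • gain A f := by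
  ext j
  simp only [gain, Pi.smul_apply, smul_eq_mul, mul_sum]
  exact sum_congr rfl fun h _ ↦ sum_congr rfl fun k _ ↦ by ring

variable {A : ι → ι → ι → ℝ}

lemma gain_nonneg (hA : ∀ h k j, 0 ≤ A h k j) {f : ι → ℝ} (hf : ∀ j, 0 ≤ f j) (j : ι) :
    0 ≤ gain A f j :=
  sum_nonneg fun h _ ↦ sum_nonneg fun k _ ↦ mul_nonneg (mul_nonneg (hA h k j) (hf h)) (hf k)

lemma sum_gain (hA : ∀ h k, ∑ j, A h k j = 1) (f : ι → ℝ) : ∑ j, gain A f j = (∑ j, f j) ^ 2 :=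
  calc ∑ j, gain A f j = ∑ h, ∑ k, (∑ j, A h k j) * f h * f k := by
        simp only [gain, sum_mul]
        rw [sum_comm]
        exact sum_congr rfl fun h _ ↦ sum_comm
    _ = (∑ j, f j) ^ 2 := by simp only [hA, one_mul, sq, sum_mul_sum]

lemma mapsTo_gain_stdSimplex (hA_nonneg : ∀ h k j, 0 ≤ A h k j) (hA_sum : ∀ h k, ∑ j, A h k j = 1) :
    Set.MapsTo (gain A) (stdSimplex ℝ ι) (stdSimplex ℝ ι) := fun f hf ↦
  ⟨gain_nonneg hA_nonneg hf.1, by rw [sum_gain hA_sum, hf.2, one_pow]⟩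

theorem existence_of_equilibria_general [Nonempty ι] {ρ : ℝ} (hρ : 0 ≤ ρ)
    (hA_nonneg : ∀ h k j, 0 ≤ A h k j) (hA_sum : ∀ h k, ∑ j, A h k j = 1) :
    ∃ f : ι → ℝ, (∀ j, 0 ≤ f j) ∧ ∑ j, f j = ρ ∧
      ∀ j, ∑ h, ∑ k, A h k j * f h * f k = ρ * f j := by
  obtain ⟨x, hx, hfix⟩ := exists_isFixedPt_of_mapsTo_stdSimplex (continuous_gain A).continuousOn
    (mapsTo_gain_stdSimplex hA_nonneg hA_sum)
  refine ⟨ρ • x, fun j ↦ mul_nonneg hρ (hx.1 j), ?_, fun j ↦ ?_⟩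
  · simp only [Pi.smul_apply, smul_eq_mul, ← mul_sum, hx.2, mul_one]
  · calc gain A (ρ • x) j = ρ ^ 2 * gain A x j := congrFun (gain_smul A ρ x) j
      _ = ρ * (ρ • x) j := by rw [hfix.eq, Pi.smul_apply, smul_eq_mul, sq, mul_assoc]

end Equilibria

/-- existence of equilibria. For every density `ρ ∈ [0,1]` and any transition
probabilities `A` satisfying the normalization property, there is at least one nonnegative
equilibrium with total mass `ρ`. -/
theorem existence_of_equilibria
    (n : ℕ) (hn : 2 ≤ n) (ρ : ℝ) (hρ0 : 0 ≤ ρ) (hρ1 : ρ ≤ 1)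
    (A : Fin n → Fin n → Fin n → ℝ)
    (hA_nonneg : ∀ h k j, 0 ≤ A h k j) (hA_le : ∀ h k j, A h k j ≤ 1)
    (hA_sum : ∀ h k, ∑ j, A h k j = 1) :
    ∃ f : Fin n → ℝ, (∀ j, 0 ≤ f j) ∧ (∑ j, f j = ρ) ∧
      (∀ j : Fin n, ∑ h, ∑ k, A h k j * f h * f k = ρ * f j) := by
  have : Nonempty (Fin n) := ⟨⟨0, by lia⟩⟩
  exact existence_of_equilibria_general hρ0 hA_nonneg hA_sum
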